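/- arXiv:1605.07473 — 2 statements merged into one kernel-verified Lean document; each statement's English description precedes it below -/
import Mathlib

section
/- For any Gopakumar–Vafa data $(G,n)$ and every integer $d \ge 1$, the sum of the coefficients $b_{d,m}$ over all $m \ge 1$ (a sum with only finitely many nonzero terms) satisfies $\sum_{m \ge 1} b_{d,m} \;=\; -2 \sum_{m \mid d} m \sum_{h=2}^{G(m)} \binom{2h-3}{h-2}\, n_h^{(m)}$. (This is the genus-one consistency of the abc-expansion of Gromov–Witten invariants in terms of Gopakumar–Vafa invariants.) -/
open Finset

/-- The integer coefficients `b_{d,m}` built from Gopakumar–Vafa data `(G, n)`. -/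
def bCoeff (G : ℕ → ℕ) (n : ℕ → ℕ → ℤ) (d m : ℕ) : ℤ :=
  ∑ k ∈ (Nat.gcd d m).divisors,
    (-1) ^ (m / k) * (2 * (d / k) : ℤ) *
      ∑ h ∈ Finset.Icc (m / k + 1) (G (d / k)),
        (Nat.choose (2 * h - 2) (h - 1 + m / k) : ℤ) * n h (d / k)

lemma aux_alt (a t : ℕ) :
    ∑ j ∈ range t, (-1 : ℤ) ^ (j + 1) * (Nat.choose (2 * a + 2) (a + 1 + (j + 1)) : ℤ)
      = -(Nat.choose (2 * a + 1) (a + 1) : ℤ)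
        + (-1) ^ t * (Nat.choose (2 * a + 1) (a + 1 + t) : ℤ) := by
  induction t with
  | zero => simp
  | succ t ih =>
    rw [sum_range_succ, ih, show a + 1 + (t + 1) = (a + 1 + t) + 1 by ring,
      Nat.choose_succ_succ (2 * a + 1) (a + 1 + t)]
    push_cast
    ring

lemma aux_alt2 (h t : ℕ) (h2 : 2 ≤ h) (ht : h ≤ t) :
    ∑ j ∈ range t, (-1 : ℤ) ^ (j + 1) * (Nat.choose (2 * h - 2) (h - 1 + (j + 1)) : ℤ)
      = -(Nat.choose (2 * h - 3) (h - 2) : ℤ) := by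
  obtain ⟨a, rfl⟩ := Nat.exists_eq_add_of_le h2
  have e1 : 2 * (2 + a) - 2 = 2 * a + 2 := by omega
  have e2 : 2 + a - 1 = a + 1 := by omega
  have e3 : 2 * (2 + a) - 3 = 2 * a + 1 := by omega
  have e4 : 2 + a - 2 = a := by omega
  rw [e1, e2, e3, e4, aux_alt, Nat.choose_eq_zero_of_lt (show 2 * a + 1 < a + 1 + t by omega),
    Nat.choose_symm_half]
  simp

/-- The summand after reindexing. -/
def auxF (G : ℕ → ℕ) (n : ℕ → ℕ → ℤ) (e j : ℕ) : ℤ :=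
  (-1) ^ j * (2 * (e : ℤ)) *
      ∑ h ∈ Finset.Icc (j + 1) (G e), (Nat.choose (2 * h - 2) (h - 1 + j) : ℤ) * n h e

lemma auxF_zero (G : ℕ → ℕ) (n : ℕ → ℕ → ℤ) (e j : ℕ) (hj : G e ≤ j) : auxF G n e j = 0 := by
  unfold auxF
  rw [Finset.Icc_eq_empty (by omega)]
  simp

lemma auxF_sum (G : ℕ → ℕ) (n : ℕ → ℕ → ℤ) (e : ℕ) :
    ∑ j ∈ range (G e), auxF G n e (j + 1) = -2 * ((e : ℤ) *
          ∑ h ∈ Finset.Icc 2 (G e), (Nat.choose (2 * h - 3) (h - 2) : ℤ) * n h e) := by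
  have h1 : ∀ j, auxF G n e (j + 1) = ∑ h ∈ Finset.Icc 2 (G e), (2 * (e : ℤ)) * n h e *
      ((-1 : ℤ) ^ (j + 1) * (Nat.choose (2 * h - 2) (h - 1 + (j + 1)) : ℤ)) := by
    intro j
    unfold auxF
    rw [Finset.mul_sum]
    have hs : Finset.Icc (j + 1 + 1) (G e) ⊆ Finset.Icc 2 (G e) := by
      apply Finset.Icc_subset_Icc_left; omega
    rw [← Finset.sum_subset hs]
    · apply Finset.sum_congr rfl; intros; ring
    · intro h hh hh'
      simp only [Finset.mem_Icc] at hh hh'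
      rw [Nat.choose_eq_zero_of_lt (by omega)]
      simp
  simp_rw [h1]
  rw [Finset.sum_comm, Finset.mul_sum, Finset.mul_sum]
  apply Finset.sum_congr rfl
  intro h hh
  simp only [Finset.mem_Icc] at hh
  rw [← Finset.mul_sum, aux_alt2 h (G e) hh.1 hh.2]
  ring

lemma bCoeff_eq (G : ℕ → ℕ) (n : ℕ → ℕ → ℤ) (d m : ℕ) (hd : 1 ≤ d) :
    bCoeff G n d m = ∑ k ∈ d.divisors, if k ∣ m then auxF G n (d / k) (m / k) else 0 := by
  rw [← Finset.sum_filter]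
  unfold bCoeff
  apply Finset.sum_congr
  · ext k
    simp only [Nat.mem_divisors, Finset.mem_filter, Nat.dvd_gcd_iff, Nat.gcd_eq_zero_iff, ne_eq]
    constructor
    · rintro ⟨⟨a, b⟩, c⟩; exact ⟨⟨a, by omega⟩, b⟩
    · rintro ⟨⟨a, b⟩, c⟩; exact ⟨⟨a, c⟩, by omega⟩
  · intro k hk
    unfold auxF
    rw [Int.natCast_div]

lemma aux_hasSum (G : ℕ → ℕ) (n : ℕ → ℕ → ℤ) (e k : ℕ) (hk : 1 ≤ k) :
    HasSum (fun m : ℕ => if k ∣ m + 1 then auxF G n e ((m + 1) / k) else 0)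
      (∑ j ∈ range (G e), auxF G n e (j + 1)) := by
  have hs : ∀ j : ℕ, k * (j + 1) - 1 + 1 = k * (j + 1) := fun j =>
    Nat.sub_add_cancel (Nat.mul_pos hk (Nat.succ_pos j))
  have hinj : Function.Injective (fun j : ℕ => k * (j + 1) - 1) := by
    intro a b hab
    have h1 : k * (a + 1) = k * (b + 1) := by
      rw [← hs a, ← hs b]; exact congrArg (· + 1) hab
    have := Nat.eq_of_mul_eq_mul_left hk h1
    omega
  rw [← hinj.hasSum_iff]
  · have : ((fun m : ℕ => if k ∣ m + 1 then auxF G n e ((m + 1) / k) else 0) ∘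
        fun j : ℕ => k * (j + 1) - 1) = fun j => auxF G n e (j + 1) := by
      funext j
      simp only [Function.comp, hs]
      rw [if_pos (Dvd.intro _ rfl), Nat.mul_div_cancel_left _ hk]
    rw [this]
    apply hasSum_sum_of_ne_finset_zero
    intro j hj
    apply auxF_zero
    simp only [Finset.mem_range] at hj
    omega
  · intro m hm
    apply if_neg
    rintro ⟨c, hc⟩
    apply hm
    rcases c with _ | c
    · simp at hc
    · exact ⟨c, by simp only; omega⟩

theorem b_sum_genus_one (G : ℕ → ℕ) (n : ℕ → ℕ → ℤ)
    (hGV : ∀ h m : ℕ, 1 ≤ m → G m < h → n h m = 0)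
    (d : ℕ) (hd : 1 ≤ d) :
    {m : ℕ | bCoeff G n d (m + 1) ≠ 0}.Finite ∧
    ∑' m : ℕ, bCoeff G n d (m + 1)
      = -2 * ∑ m ∈ d.divisors, (m : ℤ) *
          ∑ h ∈ Finset.Icc 2 (G m), (Nat.choose (2 * h - 3) (h - 2) : ℤ) * n h m := by
  constructor
  · apply (Finset.finite_toSet
      (d.divisors.biUnion fun k => range (k * (G (d / k)) + k))).subset
    intro m hm
    simp only [Set.mem_setOf_eq, bCoeff_eq G n d _ hd] at hm
    obtain ⟨k, hk, hne⟩ := Finset.exists_ne_zero_of_sum_ne_zero hm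
    simp only [Finset.coe_biUnion, Set.mem_iUnion, Finset.mem_coe, Finset.mem_range]
    refine ⟨k, hk, ?_⟩
    by_contra hlt
    apply hne
    split_ifs with hdv
    · apply auxF_zero
      have hk0 : 0 < k := Nat.pos_of_mem_divisors hk
      rw [Nat.le_div_iff_mul_le hk0, mul_comm]
      omega
    · rfl
  · have key : HasSum (fun m : ℕ => bCoeff G n d (m + 1))
        (∑ k ∈ d.divisors, ∑ j ∈ range (G (d / k)), auxF G n (d / k) (j + 1)) := by
      simp_rw [bCoeff_eq G n d _ hd]
      apply hasSum_sum
      intro k hk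
      exact aux_hasSum G n (d / k) k (Nat.pos_of_mem_divisors hk)
    rw [key.tsum_eq, Nat.sum_div_divisors d (fun e => ∑ j ∈ range (G e), auxF G n e (j + 1)),
      Finset.mul_sum]
    exact Finset.sum_congr rfl fun e _ => auxF_sum G n e
end

section
/- Let $a_1 > 0$ and $a_0$ be real numbers. Then, as the integer $g \to \infty$, $f_g^{CS}\, (a_0 + a_1 g)^{2g-3} \;\sim\; \frac{\Gamma\!\left(2g - \tfrac{3}{2}\right)}{\left(\tfrac{4\pi}{e\, a_1}\right)^{2g - 3/2}} \cdot \frac{\left(\tfrac{2e}{a_1}\right)^{3/2} e^{2 a_0 / a_1}}{2 \pi^2}$, i.e. the ratio of the two sides tends to $1$. (This is the factorial growth of the resolved-conifold Gromov–Witten invariants $N_{g,d} = f_g^{CS} d^{2g-3}$ along the diagonal $d = a_0 + a_1 g$.) -/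
open Real Filter Topology

/-- `f_g^CS = (-1)^(g-1) B_{2g} / (2g (2g-2)!)` for `g ≥ 1`. -/
noncomputable def fCS (g : ℕ) : ℝ :=
  (-1) ^ (g - 1) * ((bernoulli (2 * g) : ℚ) : ℝ) / (2 * g * Nat.factorial (2 * g - 2))

lemma aux_zeta : Tendsto (fun m : ℕ => ∑' n : ℕ, 1 / (n : ℝ) ^ (2 * (m + 1))) atTop (𝓝 1) := by
  have h := tendsto_tsum_of_dominated_convergence (𝓕 := atTop)
    (f := fun (m : ℕ) (n : ℕ) => 1 / (n : ℝ) ^ (2 * (m + 1)))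
    (g := fun n : ℕ => if n = 1 then (1 : ℝ) else 0)
    (bound := fun n : ℕ => 1 / (n : ℝ) ^ 2)
    (Real.summable_one_div_nat_pow.mpr (by norm_num)) ?_ ?_
  · simpa using h
  · intro n
    rcases Nat.lt_trichotomy n 1 with hn | hn | hn
    · have : n = 0 := by omega
      subst this
      simp
    · subst hn
      simp
    · have hn' : (1 : ℝ) < n := by exact_mod_cast hn
      rw [if_neg (by omega)]
      have h1 : Tendsto (fun k : ℕ => (1 / (n : ℝ)) ^ k) atTop (𝓝 0) :=
        tendsto_pow_atTop_nhds_zero_of_lt_one (by positivity)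
          (by rw [div_lt_one (by linarith)]; exact hn')
      have h2 : Tendsto (fun m : ℕ => 2 * (m + 1)) atTop atTop :=
        tendsto_atTop_mono (fun m => by simp only [id]; omega) tendsto_id
      refine (h1.comp h2).congr fun m => ?_
      simp
  · refine Eventually.of_forall fun m n => ?_
    rcases Nat.eq_zero_or_pos n with hn | hn
    · subst hn
      simp
    · have hn' : (1 : ℝ) ≤ n := by exact_mod_cast hn
      rw [Real.norm_of_nonneg (by positivity)]
      apply one_div_le_one_div_of_le (by positivity)
      exact pow_le_pow_right₀ hn' (by omega)

lemma aux_fCS (m : ℕ) : fCS (m + 1) =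
    2 * (2 * m + 1) * (∑' n : ℕ, 1 / (n : ℝ) ^ (2 * (m + 1))) / (2 * π) ^ (2 * m + 2) := by
  rw [(hasSum_zeta_nat (Nat.succ_ne_zero m)).tsum_eq]
  unfold fCS
  have e1 : 2 * (m + 1) - 2 = 2 * m := by omega
  have e2 : 2 * (m + 1) - 1 = 2 * m + 1 := by omega
  have e3 : 2 * (m + 1) = 2 * m + 1 + 1 := by omega
  have hs : ((-1 : ℝ)) ^ (m + 1 + 1) = (-1) ^ m := by ring
  simp only [Nat.succ_eq_add_one, Nat.add_sub_cancel, e1, e2, hs]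
  rw [e3, Nat.factorial_succ, Nat.factorial_succ]
  have hf : ((2 * m).factorial : ℝ) ≠ 0 := by positivity
  have hm : (m : ℝ) + 1 ≠ 0 := by positivity
  have hm2 : 2 * (m : ℝ) + 1 ≠ 0 := by positivity
  have hpi := Real.pi_ne_zero
  push_cast
  have : (2 * (m : ℝ) + 1 + 1) = 2 * (m + 1) := by ring
  rw [this]
  field_simp
  ring

lemma aux_Gamma (n : ℕ) (hn : 0 < n) : Real.Gamma (n + 1 / 2) =
    Stirling.stirlingSeq (2 * n) / Stirling.stirlingSeq n * √2 * √π * (n / exp 1) ^ n := by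
  have h := Real.Gamma_mul_Gamma_add_half (n : ℝ)
  obtain ⟨k, rfl⟩ : ∃ k, n = k + 1 := ⟨n - 1, by omega⟩
  have h1 : Real.Gamma ((k + 1 : ℕ) : ℝ) = k.factorial := by
    push_cast; exact Real.Gamma_nat_eq_factorial k
  have h2 : Real.Gamma (2 * ((k + 1 : ℕ) : ℝ)) = (2 * k + 1).factorial := by
    rw [← Real.Gamma_nat_eq_factorial]; push_cast; ring_nf
  have h3 : (2 : ℝ) ^ (1 - 2 * ((k + 1 : ℕ) : ℝ)) = 2 / 4 ^ (k + 1) := by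
    rw [Real.rpow_sub two_pos, Real.rpow_one, Real.rpow_mul (by norm_num), Real.rpow_natCast]
    norm_num
  rw [h1, h2, h3] at h
  have hk : (k.factorial : ℝ) ≠ 0 := by positivity
  have hG : Real.Gamma (((k + 1 : ℕ) : ℝ) + 1 / 2) =
      (2 * k + 1).factorial * (2 / 4 ^ (k + 1)) * √π / k.factorial := by
    rw [eq_div_iff hk, mul_comm]; exact h
  rw [hG]
  unfold Stirling.stirlingSeq
  have e3 : 2 * (k + 1) = 2 * k + 1 + 1 := by omega
  have hq : √(2 * ((2 * (k + 1) : ℕ) : ℝ)) = √2 * √(2 * ((k + 1 : ℕ) : ℝ)) := by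
    rw [← Real.sqrt_mul (by norm_num)]; push_cast; ring_nf
  have hr : (((2 * (k + 1) : ℕ) : ℝ) / exp 1) ^ (2 * (k + 1)) =
      4 ^ (k + 1) * (((k + 1 : ℕ) : ℝ) / exp 1) ^ (k + 1) * (((k + 1 : ℕ) : ℝ) / exp 1) ^ (k + 1) := by
    rw [← mul_pow, ← mul_pow, pow_mul]; push_cast; ring
  have hf2 : (((2 * (k + 1)).factorial : ℕ) : ℝ) = 2 * (k + 1) * (2 * k + 1).factorial := by
    rw [e3, Nat.factorial_succ]; push_cast; ring
  have hf1 : (((k + 1).factorial : ℕ) : ℝ) = (k + 1) * k.factorial := by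
    rw [Nat.factorial_succ]; push_cast; ring
  rw [hq, hr, hf2, hf1]
  have hp : (((k + 1 : ℕ) : ℝ) / exp 1) ^ (k + 1) ≠ 0 := by positivity
  have hs : √(2 * ((k + 1 : ℕ) : ℝ)) ≠ 0 := by positivity
  generalize (((k + 1 : ℕ) : ℝ) / exp 1) ^ (k + 1) = p at *
  generalize √(2 * ((k + 1 : ℕ) : ℝ)) = s at *
  have : (k : ℝ) + 1 ≠ 0 := by positivity
  have : √2 ≠ 0 := by positivity
  field_simp

lemma aux_const (a1 : ℝ) (ha1 : 0 < a1) :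
    (4 * π / (exp 1 * a1)) ^ ((1 : ℝ) / 2) * (a1 * √2 * exp 1 ^ 2)
      = (2 * exp 1 / a1) ^ ((3 : ℝ) / 2) * √π * a1 ^ 2 := by
  have hpi := Real.pi_pos
  have he := Real.exp_pos 1
  have h2 : (2 * exp 1 / a1) ^ ((3 : ℝ) / 2) = (2 * exp 1 / a1) * √(2 * exp 1 / a1) := by
    rw [Real.sqrt_eq_rpow, show (3 : ℝ) / 2 = 1 + 1 / 2 by norm_num,
      Real.rpow_add (by positivity), Real.rpow_one]
  rw [h2, ← Real.sqrt_eq_rpow]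
  rw [← sq_eq_sq₀ (by positivity) (by positivity)]
  simp only [mul_pow]
  rw [Real.sq_sqrt (by positivity), Real.sq_sqrt (by positivity), Real.sq_sqrt (by positivity),
    Real.sq_sqrt (by positivity)]
  field_simp
  norm_num

lemma aux_r : Tendsto (fun m : ℕ => Stirling.stirlingSeq (2 * (2 * m)) /
    Stirling.stirlingSeq (2 * m)) atTop (𝓝 1) := by
  have hs := Stirling.tendsto_stirlingSeq_sqrt_pi
  have h2 : Tendsto (fun m : ℕ => 2 * m) atTop atTop :=
    tendsto_atTop_mono (fun m => by simp only [id]; omega) tendsto_id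
  have hp : √π ≠ 0 := by positivity
  have := ((hs.comp h2).comp h2).div (hs.comp h2) hp
  rw [div_self hp] at this
  exact this

lemma aux_lim (c : ℝ) : Tendsto (fun m : ℕ => (1 + 1 / (2 * m)) *
      (∑' n : ℕ, 1 / (n : ℝ) ^ (2 * (m + 1))) * ((1 + c / m) ^ m) ^ 2 / (1 + c / m) /
      (Stirling.stirlingSeq (2 * (2 * m)) / Stirling.stirlingSeq (2 * m) * exp c ^ 2))
      atTop (𝓝 1) := by
  have hc : ∀ c : ℝ, Tendsto (fun m : ℕ => 1 + c / (m : ℝ)) atTop (𝓝 1) := fun c => by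
    simpa using (tendsto_const_div_atTop_nhds_zero_nat c).const_add 1
  have h1 : Tendsto (fun m : ℕ => (1 : ℝ) + 1 / (2 * m)) atTop (𝓝 1) := by
    refine (hc (1 / 2)).congr fun m => ?_
    rw [div_div]
  have h := (((h1.mul aux_zeta).mul ((Real.tendsto_one_add_div_pow_exp c).pow 2)).div (hc c)
    one_ne_zero).div (aux_r.mul_const (exp c ^ 2)) (by positivity)
  have he : exp c ^ 2 ≠ 0 := by positivity
  have e1 : (1 : ℝ) * 1 * exp c ^ 2 / 1 / (1 * exp c ^ 2) = 1 := by field_simp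
  rw [e1] at h
  exact h

theorem conifold_diagonal_growth (a0 a1 : ℝ) (ha1 : 0 < a1) :
    Tendsto
      (fun g : ℕ =>
        fCS g * (a0 + a1 * g) ^ (2 * g - 3) /
          (Real.Gamma (2 * (g : ℝ) - 3 / 2) /
              (4 * Real.pi / (Real.exp 1 * a1)) ^ (2 * (g : ℝ) - 3 / 2) *
            ((2 * Real.exp 1 / a1) ^ ((3 : ℝ) / 2) * Real.exp (2 * a0 / a1) /
              (2 * Real.pi ^ 2))))
      atTop (𝓝 1) := by
  rw [← tendsto_add_atTop_iff_nat 1]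
  have hc1 : Tendsto (fun m : ℕ => 1 + ((a0 + a1) / a1) / (m : ℝ)) atTop (𝓝 1) := by
    simpa using (tendsto_const_div_atTop_nhds_zero_nat ((a0 + a1) / a1)).const_add 1
  refine (aux_lim ((a0 + a1) / a1)).congr' ?_
  filter_upwards [eventually_gt_atTop 0, hc1.eventually_ne one_ne_zero] with m hm hcm
  have hm' : (m : ℝ) ≠ 0 := by positivity
  have hpi := Real.pi_pos
  have he := Real.exp_pos 1
  have ea : 2 * ((m + 1 : ℕ) : ℝ) - 3 / 2 = ((2 * m : ℕ) : ℝ) + 1 / 2 := by push_cast; ring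
  have eb : a0 + a1 * ((m + 1 : ℕ) : ℝ) = a1 * m * (1 + ((a0 + a1) / a1) / m) := by
    push_cast; field_simp; ring
  have ec : exp (2 * a0 / a1) = exp ((a0 + a1) / a1) ^ 2 / exp 1 ^ 2 := by
    rw [← Real.exp_nat_mul, ← Real.exp_nat_mul, ← Real.exp_sub]
    congr 1; push_cast; field_simp; ring
  obtain ⟨k, rfl⟩ : ∃ k, m = k + 1 := ⟨m - 1, by omega⟩
  have ed : ∀ x : ℝ, x ≠ 0 → x ^ (2 * (k + 1 + 1) - 3) = (x ^ (k + 1)) ^ 2 / x := by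
    intro x hx
    rw [eq_div_iff hx, show 2 * (k + 1 + 1) - 3 = 2 * k + 1 by omega]; ring
  rw [aux_fCS, ea, aux_Gamma _ (by omega), Real.rpow_add (by positivity), Real.rpow_natCast, eb,
    ed _ (by positivity), ec]
  have hK := aux_const a1 ha1
  have hX : 0 < (4 * π / (exp 1 * a1)) ^ ((1 : ℝ) / 2) := by positivity
  have hY : (2 * exp 1 / a1) ^ ((3 : ℝ) / 2) =
    (4 * π / (exp 1 * a1)) ^ ((1 : ℝ) / 2) * (√2 * exp 1 ^ 2) / (√π * a1) := by
    rw [eq_div_iff (by positivity)]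
    apply mul_right_cancel₀ ha1.ne'
    linear_combination -hK
  rw [hY]
  have hs1 : Stirling.stirlingSeq (2 * (k + 1)) ≠ 0 := (Stirling.stirlingSeq'_pos (2 * k + 1)).ne'
  have hs2 : Stirling.stirlingSeq (2 * (2 * (k + 1))) ≠ 0 :=
    (Stirling.stirlingSeq'_pos (4 * k + 3)).ne' ∘ fun h => by rw [← h]; congr 1; ring
  have hE := Real.exp_pos ((a0 + a1) / a1)
  have hsp : 0 < √π := by positivity
  have hsq : √2 * √2 = 2 := Real.mul_self_sqrt (by norm_num)
  have hs0 : 0 < √2 := by positivity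
  have hpw : (((2 * (k + 1) : ℕ) : ℝ) / exp 1) ^ (2 * (k + 1)) /
      (4 * π / (exp 1 * a1)) ^ (2 * (k + 1)) =
      ((a1 * ((k + 1 : ℕ) : ℝ)) ^ (k + 1)) ^ 2 / (2 * π) ^ (2 * (k + 1)) := by
    rw [← div_pow, ← pow_mul, mul_comm (k + 1) 2, ← div_pow]
    congr 1; push_cast; field_simp; ring
  rw [mul_pow (a1 * ((k + 1 : ℕ) : ℝ)), mul_pow _ _ 2, pow_add (2 * π) _ 2]
  generalize (4 * π / (exp 1 * a1)) ^ ((1 : ℝ) / 2) = X at *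
  generalize exp ((a0 + a1) / a1) = E at *
  generalize 1 + (a0 + a1) / a1 / ((k + 1 : ℕ) : ℝ) = C at *
  generalize Stirling.stirlingSeq (2 * (k + 1)) = S1 at *
  generalize Stirling.stirlingSeq (2 * (2 * (k + 1))) = S2 at *
  generalize (∑' n : ℕ, 1 / (n : ℝ) ^ (2 * (k + 1 + 1))) = Z at *
  have hA : (((2 * (k + 1) : ℕ) : ℝ) / exp 1) ^ (2 * (k + 1)) =
      ((a1 * ((k + 1 : ℕ) : ℝ)) ^ (k + 1)) ^ 2 / (2 * π) ^ (2 * (k + 1)) *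
      (4 * π / (exp 1 * a1)) ^ (2 * (k + 1)) := by
    rw [← hpw, div_mul_cancel₀ _ (by positivity)]
  rw [hA]
  have q1 : 0 < (a1 * ((k + 1 : ℕ) : ℝ)) ^ (k + 1) := by positivity
  have q2 : 0 < (2 * π) ^ (2 * (k + 1)) := by positivity
  have q3 : 0 < (4 * π / (exp 1 * a1)) ^ (2 * (k + 1)) := by positivity
  generalize (a1 * ((k + 1 : ℕ) : ℝ)) ^ (k + 1) = Q1 at *
  generalize (2 * π) ^ (2 * (k + 1)) = Q2 at *
  generalize (4 * π / (exp 1 * a1)) ^ (2 * (k + 1)) = Q3 at *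
  generalize √π = P at *
  generalize exp 1 = e at *
  clear hA hpw hY hK ed ec eb ea hc1
  generalize √2 = t at *
  generalize C ^ (k + 1) = D at *
  generalize ((k + 1 : ℕ) : ℝ) = M at *
  obtain rfl | hZ := eq_or_ne Z 0
  · simp
  obtain rfl | hD := eq_or_ne D 0
  · simp
  field_simp
  linear_combination (2 * M + 1) * hsq
end
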